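/- The only rational points (v,u) ∈ ℚ² on the curve u² = v³ + v² + 2v + 1 are (0, 1) and (0, -1). Consequently, the only rational point (x,y) ∈ ℚ² on y² = x⁴ - 2x³ + x² - x is (0,0), and there is no m ∈ ℚ such that x² + m has irreducible second iterate and reducible third iterate over ℚ. -/

import Mathlib

open Polynomial

/-!
The equation of the curve reads `(u - (v + 1)) * (u + (v + 1)) = v ^ 3`, where the two factors are
nearly coprime. So they are essentially cubes, and a rational point with `v ≠ 0` yields a primitive
integral solution of `a³ + b³ + 2abc = 2c³` with `c ≠ 0`, whose size is controlled by `v`.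

On such a solution `(3a)³ + (3b)³ - (2c)³ + 54abc` equals `46c³`, and it splits into three linear
factors over `ℤ[ω]`. As `2` and `23` are inert, these factors are coprime away from `3`, and
unique factorization makes the two conjugate ones cubes. Comparing coefficients leads
back to a rational point of the original curve, so much smaller that `|c|` decreases
if the construction is repeated. Hence `v = 0`.

The quartic maps to the curve by `v = -1 / x`, `u = y / x ^ 2`. Finally, if composing an irreducible
polynomial `f` with `X ^ 2 + m` makes it reducible, then `α - m` is a square in `K(α)` for a root
`α` of `f`, and its norm `f(m)` is a square in `K`; for `f = (X ^ 2 + m) ∘ (X ^ 2 + m)` over `ℚ`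
this is a point of the quartic with `x = -m`.
-/

section ReducibleComposition

variable {K : Type*} [Field K]

theorem norm_gen_sub_algebraMap {L : Type*} [CommRing L] [Algebra K L] (pb : PowerBasis K L)
    (m : K) :
    Algebra.norm K (pb.gen - algebraMap K L m) = (-1) ^ pb.dim * (minpoly K pb.gen).eval m := by
  rw [← neg_sub, ← neg_one_smul K, Algebra.smul_def, map_mul, Algebra.norm_algebraMap, pb.finrank,
    Algebra.norm_eq_matrix_det pb.basis, map_sub, AlgHom.commutes, ← charpoly_leftMulMatrix,
    Matrix.eval_charpoly]
  rfl

open IntermediateField in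
theorem exists_pow_eq_of_not_irreducible_comp {f : K[X]} (hmonic : f.Monic)
    (hirr : Irreducible f) {p : ℕ} (hp : p.Prime) {m : K}
    (hred : ¬ Irreducible (f.comp (X ^ p + C m))) :
    ∃ s, s ^ p = (-1) ^ f.natDegree * f.eval m := by
  contrapose! hred
  refine irreducible_comp hmonic (monic_X_pow_add_C m hp.ne_zero) hirr fun E _ _ α hα => ?_
  have hint : IsIntegral K α := minpoly.ne_zero_iff.1 (hα ▸ hirr.ne_zero)
  have hdim : (adjoin.powerBasis hint).dim = f.natDegree := hα ▸ adjoin.powerBasis_dim hint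
  have hmin : minpoly K (AdjoinSimple.gen K α) = f := by rw [minpoly_gen, hα]
  have hnorm : Algebra.norm K (AdjoinSimple.gen K α - algebraMap K K⟮α⟯ m) =
      (-1) ^ f.natDegree * f.eval m := by
    simpa only [adjoin.powerBasis_gen, hdim, hmin] using
      norm_gen_sub_algebraMap (adjoin.powerBasis hint) m
  have hkummer : (X ^ p + C m : K[X]).map (algebraMap K K⟮α⟯) - C (AdjoinSimple.gen K α) =
      X ^ p - C (AdjoinSimple.gen K α - algebraMap K K⟮α⟯ m) := by
    simp only [Polynomial.map_add, Polynomial.map_pow, map_X, map_C, C_sub]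
    ring
  rw [hkummer]
  refine X_pow_sub_C_irreducible_of_prime hp fun s hs => hred (Algebra.norm K s) ?_
  rw [← map_pow, hs, hnorm]

theorem exists_sq_eq_of_newly_reducible {m : K}
    (hirr : Irreducible ((X ^ 2 + C m).comp (X ^ 2 + C m)))
    (hred : ¬ Irreducible (((X ^ 2 + C m).comp (X ^ 2 + C m)).comp (X ^ 2 + C m))) :
    ∃ y, y ^ 2 = m ^ 4 + 2 * m ^ 3 + m ^ 2 + m := by
  have hmonic : (X ^ 2 + C m).Monic := monic_X_pow_add_C m two_ne_zero
  have hdeg : (X ^ 2 + C m).natDegree = 2 := natDegree_X_pow_add_C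
  obtain ⟨y, hy⟩ := exists_pow_eq_of_not_irreducible_comp
    (hmonic.comp hmonic (by rw [hdeg]; exact two_ne_zero)) hirr Nat.prime_two hred
  refine ⟨y, hy.trans ?_⟩
  simp only [natDegree_comp, hdeg, eval_comp, eval_add, eval_pow, eval_X, eval_C]
  ring

end ReducibleComposition

theorem exists_eq_mul_pow_of_mul_eq_mul_pow {κ P N e : ℤ} {n : ℕ} (hn : Odd n) (hκ : κ ≠ 0)
    (hκN : IsCoprime κ N) (hPN : IsCoprime P N) (h : P * N = κ * e ^ n) :
    ∃ r k, P = κ * r ^ n ∧ N = k ^ n ∧ e = r * k := by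
  obtain ⟨Q, rfl⟩ : κ ∣ P := hκN.dvd_of_dvd_mul_right ⟨e ^ n, h⟩
  have hQN : Q * N = e ^ n := mul_left_cancel₀ hκ (by rw [← mul_assoc, h])
  have hcop : IsCoprime Q N := hPN.of_isCoprime_of_dvd_left (dvd_mul_left Q κ)
  obtain ⟨r, hr⟩ := Int.eq_pow_of_mul_eq_pow_odd_left hcop hn hQN
  obtain ⟨k, hk⟩ := Int.eq_pow_of_mul_eq_pow_odd_right hcop hn hQN
  refine ⟨r, k, by rw [hr], hk, hn.strictMono_pow.injective ?_⟩
  simp only [mul_pow, ← hr, ← hk, hQN]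

theorem exists_eq_pow_of_mul_eq_pow_of_isCoprime_sub {f g p k : ℤ} {n : ℕ} (hn : Odd n)
    (h : f * g = p ^ n) (hcop : IsCoprime p (g - k * f)) :
    ∃ α β, f = α ^ n ∧ g = β ^ n ∧ p = α * β ∧ IsCoprime α β := by
  have hfg : IsCoprime f g := by
    have hsub : IsCoprime f (g - k * f) := hcop.pow_left.of_isCoprime_of_dvd_left ⟨g, h.symm⟩
    simpa only [sub_add_cancel] using hsub.add_mul_right_right k
  obtain ⟨α, β, hα, hβ, hp⟩ := exists_eq_mul_pow_of_mul_eq_mul_pow hn one_ne_zero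
    isCoprime_one_left hfg (h.trans (one_mul _).symm)
  rw [one_mul] at hα
  refine ⟨α, β, hα, hβ, hp, ?_⟩
  rwa [hα, hβ, IsCoprime.pow_iff hn.pos hn.pos] at hfg

theorem abs_lt_sq_mul_of_sq_le {s r M W : ℤ} (hs : s ^ 2 ≤ 4 * M) (hM : 2 ≤ M) (hr : r ≠ 0)
    (hW : s - 2 * r = 3 * W) : |W| < (r * M) ^ 2 := by
  have hsM : |s| ≤ 2 * M := abs_le_of_sq_le_sq (by nlinarith) (by linarith)
  have hr1 : 1 ≤ |r| := Int.one_le_abs hr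
  have hW3 : 3 * |W| ≤ 2 * M + 2 * |r| :=
    calc 3 * |W| = |s - 2 * r| := by rw [hW, abs_mul]; rfl
      _ ≤ |s| + |2 * r| := abs_sub _ _
      _ ≤ 2 * M + 2 * |r| := by rw [abs_mul, abs_two]; gcongr
  have hprod : 2 * (|r| * M) ≤ (r * M) ^ 2 := by
    rw [← sq_abs, abs_mul, abs_of_nonneg (by linarith : 0 ≤ M)]
    have : 2 ≤ |r| * M := by nlinarith
    nlinarith
  nlinarith

theorem exists_curve_coords_of_eq {σ δ r : ℤ}
    (h : σ * (9 * δ ^ 2 - σ ^ 2) = 184 * r ^ 3 + 6 * r * (σ ^ 2 + 3 * δ ^ 2)) :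
    ∃ W, σ - 2 * r = 3 * W ∧
      δ ^ 2 * W = (2 * r) ^ 3 + (2 * r) ^ 2 * W + 2 * (2 * r) * W ^ 2 + W ^ 3 := by
  obtain ⟨W, hW⟩ : (3 : ℤ) ∣ σ - 2 * r := by
    refine Int.prime_three.dvd_of_dvd_pow (n := 3) ?_
    exact ⟨3 * δ ^ 2 * σ - 4 * r * σ ^ 2 - 6 * r * δ ^ 2 + 4 * r ^ 2 * σ - 64 * r ^ 3,
      by linear_combination -h⟩
  refine ⟨W, hW, mul_left_cancel₀ (by norm_num : (27 : ℤ) ≠ 0) ?_⟩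
  obtain rfl : σ = 3 * W + 2 * r := by linarith
  linear_combination h

theorem two_mul_abs_sub_mul_round_le (a : ℤ) {n : ℤ} (hn : 0 < n) :
    2 * |a - n * round (a / n : ℚ)| ≤ n := by
  have hn' : (0 : ℚ) < n := by exact_mod_cast hn
  have hround := mul_le_mul_of_nonneg_left (abs_sub_round (a / n : ℚ)) hn'.le
  rw [← abs_of_pos hn', ← abs_mul, abs_of_pos hn', mul_sub, mul_div_cancel₀ _ hn'.ne'] at hround
  have : ((2 * |a - n * round (a / n : ℚ)| : ℤ) : ℚ) ≤ n := by
    push_cast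
    linarith
  exact_mod_cast this

/-- The ring `ℤ[ω]` of Eisenstein integers, where `ω ^ 2 = -1 - ω`; `⟨x, y⟩` stands for
`x + y * ω`. -/
abbrev Eisenstein : Type := QuadraticAlgebra ℤ (-1) (-1)

namespace Eisenstein

theorem norm_eq (z : Eisenstein) : z.norm = z.re ^ 2 - z.re * z.im + z.im ^ 2 := by
  rw [QuadraticAlgebra.norm_def]; ring

theorem intCast_norm (z : Eisenstein) : (z.norm : Eisenstein) = z * star z := by
  simpa only [eq_intCast] using QuadraticAlgebra.algebraMap_norm_eq_mul_star z

theorem four_mul_norm (z : Eisenstein) :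
    4 * z.norm = (2 * z.re - z.im) ^ 2 + 3 * z.im ^ 2 := by
  rw [norm_eq]; ring

theorem dvd_norm_of_dvd {p : ℤ} {z : Eisenstein} (hre : p ∣ z.re) (him : p ∣ z.im) :
    p ∣ z.norm := by
  rw [norm_eq, sq, sq]
  exact dvd_add (dvd_sub (hre.mul_left _) (hre.mul_right _)) (him.mul_left _)

theorem norm_nonneg (z : Eisenstein) : 0 ≤ z.norm := by
  linarith [four_mul_norm z, sq_nonneg (2 * z.re - z.im), sq_nonneg z.im]

theorem norm_eq_zero_iff {z : Eisenstein} : z.norm = 0 ↔ z = 0 := by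
  refine ⟨fun h => ?_, fun h => by rw [h, QuadraticAlgebra.norm_zero]⟩
  have hsum := four_mul_norm z
  have him : z.im = 0 := by
    nlinarith [sq_nonneg (2 * z.re - z.im), sq_nonneg z.im]
  have hre : z.re = 0 := by
    rw [h, him] at hsum
    nlinarith
  exact QuadraticAlgebra.ext hre him

theorem norm_pos {z : Eisenstein} (hz : z ≠ 0) : 0 < z.norm :=
  (norm_nonneg z).lt_of_ne' (mt norm_eq_zero_iff.1 hz)

theorem four_mul_norm_le {z : Eisenstein} {n : ℤ} (hre : 2 * |z.re| ≤ n) (him : 2 * |z.im| ≤ n) :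
    4 * z.norm ≤ 3 * n ^ 2 := by
  obtain ⟨hre₁, hre₂⟩ := abs_le.1 (show |2 * z.re| ≤ n by rwa [abs_mul, abs_two])
  obtain ⟨him₁, him₂⟩ := abs_le.1 (show |2 * z.im| ≤ n by rwa [abs_mul, abs_two])
  rw [norm_eq]
  nlinarith [sq_nonneg (z.re + z.im)]

instance : Div Eisenstein :=
  ⟨fun x y => ⟨round ((x * star y).re / y.norm : ℚ), round ((x * star y).im / y.norm : ℚ)⟩⟩

theorem div_def (x y : Eisenstein) : x / y =
    ⟨round ((x * star y).re / y.norm : ℚ), round ((x * star y).im / y.norm : ℚ)⟩ := rfl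

theorem norm_sub_mul_div_lt (x : Eisenstein) {y : Eisenstein} (hy : y ≠ 0) :
    (x - y * (x / y)).norm < y.norm := by
  have hpos := norm_pos hy
  have hmul : (x - y * (x / y)) * star y = x * star y - (y.norm : Eisenstein) * (x / y) := by
    rw [intCast_norm]; ring
  have hle : 4 * ((x - y * (x / y)).norm * y.norm) ≤ 3 * y.norm ^ 2 := by
    rw [← QuadraticAlgebra.norm_star y, ← map_mul, hmul, QuadraticAlgebra.norm_star]
    apply four_mul_norm_le
    · simpa [div_def] using two_mul_abs_sub_mul_round_le (x * star y).re hpos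
    · simpa [div_def] using two_mul_abs_sub_mul_round_le (x * star y).im hpos
  nlinarith

instance : EuclideanDomain Eisenstein where
  quotient := (· / ·)
  quotient_zero x := by ext <;> simp [div_def]
  remainder x y := x - y * (x / y)
  quotient_mul_add_remainder_eq x y := by ring
  r x y := x.norm.natAbs < y.norm.natAbs
  r_wellFounded := (measure fun z : Eisenstein => z.norm.natAbs).wf
  remainder_lt x y hy :=
    Int.natAbs_lt_natAbs_of_nonneg_of_lt (norm_nonneg _) (norm_sub_mul_div_lt x hy)
  mul_left_not_lt x y hy := by
    rw [map_mul, Int.natAbs_mul, not_lt]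
    exact Nat.le_mul_of_pos_right _ (Int.natAbs_pos.2 (norm_pos hy).ne')

/-- The square root `1 + 2 * ω` of `-3`, which generates the prime ideal above `3`. -/
def sqrtNegThree : Eisenstein := ⟨1, 2⟩

theorem sqrtNegThree_sq : sqrtNegThree ^ 2 = -3 := by
  decide

theorem norm_sqrtNegThree : sqrtNegThree.norm = 3 := by
  decide

theorem norm_eq_one_of_isUnit {z : Eisenstein} (hz : IsUnit z) : z.norm = 1 :=
  (Int.isUnit_iff.1 (hz.map QuadraticAlgebra.norm)).resolve_right
    (by linarith [norm_nonneg z])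

theorem isCoprime_star {z : Eisenstein} (hz : IsCoprime z.re z.im) (h3 : ¬ (3 : ℤ) ∣ z.norm) :
    IsCoprime z (star z) := by
  obtain ⟨a, b, hab⟩ := hz
  have hst : (⟨a + b, a⟩ : Eisenstein) * z + ⟨-b, a⟩ * star z = sqrtNegThree := by
    ext <;> simp [sqrtNegThree]
    · linear_combination hab
    · linear_combination 2 * hab
  obtain ⟨k, l, hkl⟩ := Int.prime_three.coprime_iff_not_dvd.2 h3
  have hkl' : (k * 3 + l * (z * star z) : Eisenstein) = 1 := by
    rw [← intCast_norm]; exact_mod_cast hkl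
  refine ⟨-k * sqrtNegThree * ⟨a + b, a⟩ + l * star z, -k * sqrtNegThree * ⟨-b, a⟩, ?_⟩
  linear_combination hkl' - k * sqrtNegThree * hst - k * sqrtNegThree_sq

theorem re_cube (z : Eisenstein) :
    (z ^ 3).re = z.re ^ 3 + z.im ^ 3 - 3 * z.re * z.im ^ 2 := by
  simp only [pow_succ, pow_zero, one_mul, QuadraticAlgebra.re_mul, QuadraticAlgebra.im_mul]
  ring

theorem im_cube (z : Eisenstein) : (z ^ 3).im = 3 * z.re * z.im * (z.re - z.im) := by
  simp only [pow_succ, pow_zero, one_mul, QuadraticAlgebra.re_mul, QuadraticAlgebra.im_mul]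
  ring

theorem three_dvd_norm_iff {z : Eisenstein} : (3 : ℤ) ∣ z.norm ↔ (3 : ℤ) ∣ z.re + z.im := by
  have : z.norm = (z.re + z.im) ^ 2 - 3 * (z.re * z.im) := by rw [norm_eq]; ring
  rw [this, dvd_sub_left (dvd_mul_right _ _), Int.prime_three.dvd_pow_iff_dvd two_ne_zero]

theorem eq_one_or_eq_neg_one_of_isUnit {z : Eisenstein} (hz : IsUnit z)
    (h3 : (3 : ℤ) ∣ z.im) : z = 1 ∨ z = -1 := by
  have hsum := four_mul_norm z
  rw [norm_eq_one_of_isUnit hz] at hsum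
  have him : z.im = 0 := by
    refine Int.eq_zero_of_abs_lt_dvd h3 (abs_lt_of_sq_lt_sq ?_ zero_le_three)
    nlinarith [sq_nonneg (2 * z.re - z.im)]
  have hre : z.re * z.re = 1 := by
    rw [him] at hsum
    linarith
  exact (mul_self_eq_one_iff.1 hre).imp (QuadraticAlgebra.ext · him)
    fun h => QuadraticAlgebra.ext h him

theorem exists_eq_cube {z : Eisenstein} {k : ℤ} (hz : IsCoprime z.re z.im)
    (hre : ¬ (3 : ℤ) ∣ z.re) (him : (3 : ℤ) ∣ z.im) (hnorm : z.norm = k ^ 3) :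
    ∃ d : Eisenstein, z = d ^ 3 ∧ d.norm = k := by
  have h3 : ¬ (3 : ℤ) ∣ z.norm := by
    rwa [three_dvd_norm_iff, dvd_add_left him]
  have hprod : z * star z = (k : Eisenstein) ^ 3 := by
    rw [← intCast_norm, hnorm, Int.cast_pow]
  obtain ⟨d, u, hu⟩ := exists_associated_pow_of_mul_eq_pow' (isCoprime_star hz h3) hprod
  have hu3 : (3 : ℤ) ∣ (u : Eisenstein).im := by
    have hdim : (3 : ℤ) ∣ (d ^ 3).im := im_cube d ▸ ⟨d.re * d.im * (d.re - d.im), by ring⟩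
    have hdre : ¬ (3 : ℤ) ∣ (d ^ 3).re := fun hdre => hre <| by
      rw [← hu, QuadraticAlgebra.re_mul]
      exact dvd_add (hdre.mul_right _) ((hdim.mul_left _).mul_right _)
    rw [← hu, QuadraticAlgebra.im_mul, add_assoc,
      dvd_add_left (dvd_add (hdim.mul_right _) ((hdim.mul_left _).mul_right _))] at him
    exact (Int.prime_three.dvd_or_dvd him).resolve_left hdre
  obtain ⟨e, he⟩ : ∃ e : Eisenstein, z = e ^ 3 := by
    rcases eq_one_or_eq_neg_one_of_isUnit u.isUnit hu3 with h | h
    · exact ⟨d, by rw [← hu, h, mul_one]⟩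
    · exact ⟨-d, by rw [← hu, h]; ring⟩
  refine ⟨e, he, (show Odd 3 by decide).strictMono_pow.injective ?_⟩
  simpa only [he, map_pow] using hnorm

theorem dvd_re_and_dvd_im_of_dvd_norm {q : ℕ} (hq : q.Prime) (hq3 : q % 3 = 2) {z : Eisenstein}
    (h : (q : ℤ) ∣ z.norm) : (q : ℤ) ∣ z.re ∧ (q : ℤ) ∣ z.im := by
  have := Fact.mk hq
  obtain ⟨j, hj⟩ : ∃ j, q = 3 * j + 2 := ⟨q / 3, by omega⟩
  -- Cubing is injective modulo `q`, as `(2 * j + 1) * 3 = 1 + 2 * (q - 1)`.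
  have hfermat (x : ZMod q) : x ^ (3 * j + 2) = x := by simpa only [← hj] using ZMod.pow_card x
  have hcube (x : ZMod q) : (x ^ 3) ^ (2 * j + 1) = x :=
    calc (x ^ 3) ^ (2 * j + 1) = x ^ (3 * j + 2) * x ^ (3 * j + 1) := by ring
      _ = x * x ^ (3 * j + 1) := by rw [hfermat]
      _ = x ^ (3 * j + 2) := (pow_succ' x (3 * j + 1)).symm
      _ = x := hfermat x
  have h3 : (3 : ZMod q) ≠ 0 := by
    rw [← Nat.cast_ofNat, Ne, ZMod.natCast_eq_zero_iff,
      Nat.prime_dvd_prime_iff_eq hq Nat.prime_three]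
    omega
  simp only [norm_eq, ← ZMod.intCast_zmod_eq_zero_iff_dvd] at h ⊢
  push_cast at h
  have hcubes : (z.re : ZMod q) ^ 3 = (-z.im) ^ 3 := by
    linear_combination (z.re + z.im : ZMod q) * h
  have hneg : (z.re : ZMod q) = -z.im := by rw [← hcube z.re, hcubes, hcube]
  have him : (z.im : ZMod q) = 0 := by
    rw [hneg] at h
    refine pow_eq_zero_iff two_ne_zero |>.1 ((mul_eq_zero_iff_left h3).1 ?_)
    linear_combination h
  exact ⟨by rw [hneg, him, neg_zero], him⟩

theorem exists_eq_cube_of_mul_norm_eq {z : Eisenstein} {κ P e : ℤ} (hz : IsCoprime z.re z.im)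
    (hre : ¬ (3 : ℤ) ∣ z.re) (him : (3 : ℤ) ∣ z.im) (hκ : κ ≠ 0) (hκz : IsCoprime κ z.norm)
    (hPz : IsCoprime P z.norm) (h : P * z.norm = κ * e ^ 3) :
    ∃ (d : Eisenstein) (r : ℤ), z = d ^ 3 ∧ P = κ * r ^ 3 ∧ e = r * d.norm := by
  obtain ⟨r, k, hP, hk, he⟩ :=
    exists_eq_mul_pow_of_mul_eq_mul_pow (by decide : Odd 3) hκ hκz hPz h
  obtain ⟨d, hd, rfl⟩ := exists_eq_cube hz hre him hk
  exact ⟨d, r, hd, hP, he⟩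

end Eisenstein

open Eisenstein

/-- A primitive integral point of the plane cubic `a³ + b³ + 2abc = 2c³`, which maps to the
curve `u² = v³ + v² + 2v + 1` both through `v = -ab / c²` and through `v = 2ac / b²`. -/
structure IsCoveringPoint (a b c : ℤ) : Prop where
  isCoprime : IsCoprime a b
  cubic_eq : a ^ 3 + b ^ 3 + 2 * a * b * c = 2 * c ^ 3

/-- The Eisenstein integer `2c - 3aω - 3bω²`. Up to sign, it and its conjugate are the linear
factors other than `3a + 3b - 2c` of `(3a)³ + (3b)³ - (2c)³ + 54abc`. -/
def cubicFactor (a b c : ℤ) : Eisenstein := ⟨3 * b + 2 * c, 3 * (b - a)⟩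

theorem norm_cubicFactor (a b c : ℤ) : (cubicFactor a b c).norm =
    9 * (a ^ 2 - a * b + b ^ 2) + 6 * (a + b) * c + 4 * c ^ 2 := by
  rw [norm_eq, cubicFactor]; ring

theorem add_mul_sq_sub_eq {a b c r : ℤ} {d : Eisenstein}
    (hd : cubicFactor a b c = d ^ 3) (hr : 3 * (a + b) - 2 * c = 46 * r ^ 3)
    (hc : c = r * d.norm) :
    (d.re + d.im) * (9 * (d.re - d.im) ^ 2 - (d.re + d.im) ^ 2) =
      184 * r ^ 3 + 6 * r * ((d.re + d.im) ^ 2 + 3 * (d.re - d.im) ^ 2) := by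
  have hre := congrArg QuadraticAlgebra.re hd
  have him := congrArg QuadraticAlgebra.im hd
  rw [re_cube, cubicFactor] at hre
  rw [im_cube, cubicFactor] at him
  rw [norm_eq] at hc
  linear_combination 4 * him - 8 * hre + 4 * hr + 24 * hc

namespace IsCoveringPoint

variable {a b c : ℤ}

theorem mul_norm_cubicFactor (h : IsCoveringPoint a b c) :
    (3 * (a + b) - 2 * c) * (cubicFactor a b c).norm = 46 * c ^ 3 := by
  rw [norm_cubicFactor]
  linear_combination 27 * h.cubic_eq

theorem not_dvd_and_dvd (h : IsCoveringPoint a b c) {p : ℤ} (hp : Prime p) : ¬ (p ∣ a ∧ p ∣ b) :=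
  fun hab => hp.not_isUnit (h.isCoprime.isUnit_of_dvd' hab.1 hab.2)

theorem isCoprime_norm_cubicFactor (h : IsCoveringPoint a b c) :
    IsCoprime 46 (cubicFactor a b c).norm := by
  have hp : Prime (23 : ℤ) := Nat.prime_iff_prime_int.1 (by norm_num)
  have h2 : ¬ (2 : ℤ) ∣ (cubicFactor a b c).norm := fun h2 => by
    obtain ⟨hre, him⟩ := dvd_re_and_dvd_im_of_dvd_norm Nat.prime_two rfl h2
    simp only [cubicFactor] at hre him
    exact h.not_dvd_and_dvd Int.prime_two ⟨by omega, by omega⟩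
  have h23 : ¬ (23 : ℤ) ∣ (cubicFactor a b c).norm := fun h23 => by
    obtain ⟨hre, him⟩ := dvd_re_and_dvd_im_of_dvd_norm (by norm_num : Nat.Prime 23) rfl h23
    simp only [Nat.cast_ofNat, cubicFactor] at hre him
    have hc : (23 : ℤ) ∣ c := by
      obtain ⟨x, hx⟩ := hre
      obtain ⟨y, hy⟩ := him
      have hmul := h.mul_norm_cubicFactor
      rw [norm_eq, cubicFactor, hx, hy] at hmul
      have : (23 : ℤ) ∣ 2 * c ^ 3 :=
        ⟨(3 * (a + b) - 2 * c) * (x ^ 2 - x * y + y ^ 2), by linarith⟩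
      exact hp.dvd_of_dvd_pow ((hp.dvd_or_dvd this).resolve_left (by norm_num))
    exact h.not_dvd_and_dvd hp ⟨by omega, by omega⟩
  exact (Int.prime_two.coprime_iff_not_dvd.2 h2).mul_left (hp.coprime_iff_not_dvd.2 h23)

theorem dvd_of_dvd_norm_cubicFactor (h : IsCoveringPoint a b c) {p : ℤ} (hp : Prime p)
    (hpN : p ∣ (cubicFactor a b c).norm) : p ∣ c := by
  have h46 : ¬ p ∣ 46 := fun h46 =>
    hp.not_isUnit (h.isCoprime_norm_cubicFactor.isUnit_of_dvd' h46 hpN)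
  have : p ∣ 46 * c ^ 3 := h.mul_norm_cubicFactor ▸ hpN.mul_left _
  exact hp.dvd_of_dvd_pow ((hp.dvd_or_dvd this).resolve_left h46)

theorem not_dvd_of_dvd_norm_cubicFactor (h : IsCoveringPoint a b c) {p : ℤ} (hp : Prime p)
    (hp3 : ¬ p ∣ 3) (hpN : p ∣ (cubicFactor a b c).norm) : ¬ p ∣ 3 * (a + b) - 2 * c := by
  intro hpP
  have hc := h.dvd_of_dvd_norm_cubicFactor hp hpN
  have hadd : p ∣ a + b := (hp.dvd_or_dvd ((dvd_sub_left (hc.mul_left 2)).1 hpP)).resolve_left hp3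
  have hprod : p ∣ 3 ^ 3 * (a * b) := by
    have : (3 : ℤ) ^ 3 * (a * b) =
        9 * (a + b) * (a + b) + (6 * (a + b) + 4 * c) * c - (cubicFactor a b c).norm := by
      rw [norm_cubicFactor]; ring
    rw [this]
    exact dvd_sub (dvd_add (hadd.mul_left _) (hc.mul_left _)) hpN
  rcases hp.dvd_or_dvd ((hp.dvd_or_dvd hprod).resolve_left (mt hp.dvd_of_dvd_pow hp3)) with ha | hb
  · exact h.not_dvd_and_dvd hp ⟨ha, (dvd_add_right ha).1 hadd⟩
  · exact h.not_dvd_and_dvd hp ⟨(dvd_add_left hb).1 hadd, hb⟩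

theorem not_dvd_re_and_dvd_im (h : IsCoveringPoint a b c) {p : ℤ} (hp : Prime p)
    (hp3 : ¬ p ∣ 3) : ¬ (p ∣ (cubicFactor a b c).re ∧ p ∣ (cubicFactor a b c).im) := by
  rintro ⟨hre, him⟩
  have hc := h.dvd_of_dvd_norm_cubicFactor hp (dvd_norm_of_dvd hre him)
  have hb := (hp.dvd_or_dvd ((dvd_add_left (hc.mul_left 2)).1 hre)).resolve_left hp3
  exact h.not_dvd_and_dvd hp
    ⟨(dvd_sub_right hb).1 ((hp.dvd_or_dvd him).resolve_left hp3), hb⟩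

theorem three_dvd_add (h : IsCoveringPoint a b c) (hc : (3 : ℤ) ∣ c) : (3 : ℤ) ∣ a + b := by
  refine Int.prime_three.dvd_of_dvd_pow (n := 3) ?_
  have : (a + b) ^ 3 = 2 * (c ^ 2 - a * b) * c + 3 * (a * b * (a + b)) := by
    linear_combination h.cubic_eq
  rw [this]
  exact dvd_add (hc.mul_left _) (dvd_mul_right _ _)

theorem nine_dvd (h : IsCoveringPoint a b c) (hc : (3 : ℤ) ∣ c) : (9 : ℤ) ∣ c := by
  obtain ⟨g, hg⟩ := h.three_dvd_add hc
  obtain ⟨k, rfl⟩ := hc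
  have ha : ¬ (3 : ℤ) ∣ a := fun ha => h.not_dvd_and_dvd Int.prime_three ⟨ha, by omega⟩
  have hb : ¬ (3 : ℤ) ∣ b := fun hb => h.not_dvd_and_dvd Int.prime_three ⟨by omega, hb⟩
  have hprod : (3 : ℤ) ∣ 2 * a * b * k :=
    ⟨6 * k ^ 3 - 3 * g ^ 3 + g * a * b, by
      obtain rfl : a = 3 * g - b := by linarith
      linarith [h.cubic_eq]⟩
  have h2 : ¬ (3 : ℤ) ∣ 2 := by norm_num
  simp only [Int.prime_three.dvd_mul, h2, ha, hb, false_or] at hprod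
  exact mul_dvd_mul_left 3 hprod

theorem isCoprime_re_im_of_dvd (h : IsCoveringPoint a b c) {z : Eisenstein}
    (hz : z ∣ cubicFactor a b c) (h3 : ¬ (3 : ℤ) ∣ z.norm) : IsCoprime z.re z.im := by
  refine isCoprime_of_prime_dvd (fun h0 => h3 (dvd_norm_of_dvd ?_ ?_)) fun p hp hre him => ?_
  · exact h0.1 ▸ dvd_zero 3
  · exact h0.2 ▸ dvd_zero 3
  have hp3 : ¬ p ∣ 3 := fun hp3 =>
    h3 ((hp.associated_of_dvd Int.prime_three hp3).dvd_iff_dvd_left.1 (dvd_norm_of_dvd hre him))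
  obtain ⟨w, hw⟩ := hz
  refine h.not_dvd_re_and_dvd_im hp hp3 ?_
  rw [hw, QuadraticAlgebra.re_mul, QuadraticAlgebra.im_mul]
  exact ⟨dvd_add (hre.mul_right _) ((him.mul_left _).mul_right _),
    dvd_add (dvd_add (hre.mul_right _) (him.mul_right _)) ((him.mul_left _).mul_right _)⟩

theorem isCoprime_norm_of_dvd (h : IsCoveringPoint a b c) {z : Eisenstein}
    (hz : z ∣ cubicFactor a b c) (h3 : ¬ (3 : ℤ) ∣ z.norm) :
    IsCoprime (3 * (a + b) - 2 * c) z.norm := by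
  refine isCoprime_of_prime_dvd (fun h0 => h3 (h0.2 ▸ dvd_zero _)) fun p hp hpP hpN => ?_
  have hp3 : ¬ p ∣ 3 := fun hp3 =>
    h3 ((hp.associated_of_dvd Int.prime_three hp3).dvd_iff_dvd_left.1 hpN)
  exact h.not_dvd_of_dvd_norm_cubicFactor hp hp3 (hpN.trans (map_dvd _ hz)) hpP

theorem exists_cubicFactor_eq_cube_of_not_three_dvd (h : IsCoveringPoint a b c)
    (hc : ¬ (3 : ℤ) ∣ c) : ∃ (d : Eisenstein) (r : ℤ),
      cubicFactor a b c = d ^ 3 ∧ 3 * (a + b) - 2 * c = 46 * r ^ 3 ∧ c = r * d.norm := by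
  have hre : ¬ (3 : ℤ) ∣ (cubicFactor a b c).re := by
    simp only [cubicFactor]
    omega
  have him : (3 : ℤ) ∣ (cubicFactor a b c).im := dvd_mul_right _ _
  have h3 : ¬ (3 : ℤ) ∣ (cubicFactor a b c).norm := by
    rwa [three_dvd_norm_iff, dvd_add_left him]
  exact exists_eq_cube_of_mul_norm_eq (h.isCoprime_re_im_of_dvd dvd_rfl h3) hre him (by norm_num)
    h.isCoprime_norm_cubicFactor (h.isCoprime_norm_of_dvd dvd_rfl h3) h.mul_norm_cubicFactor

theorem exists_cubicFactor_eq_sqrtNegThree_cube_mul (h : IsCoveringPoint a b c)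
    (hc : (3 : ℤ) ∣ c) : ∃ (z : Eisenstein) (e : ℤ), c = 9 * e ∧
      cubicFactor a b c = sqrtNegThree ^ 3 * z ∧ 3 * (a + b) - 2 * c = 9 * (z.im - 6 * e) ∧
      ¬ (3 : ℤ) ∣ z.norm := by
  obtain ⟨g, hg⟩ := h.three_dvd_add hc
  obtain ⟨e, rfl⟩ := h.nine_dvd hc
  obtain rfl : b = 3 * g - a := by linarith
  refine ⟨⟨a + 6 * e - (g + 4 * e), g + 4 * e⟩, e, rfl, ?_, ?_, ?_⟩
  · rw [show sqrtNegThree ^ 3 = ⟨-3, -6⟩ by decide, QuadraticAlgebra.mk_mul_mk, cubicFactor]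
    ext <;> ring
  · ring
  · rw [three_dvd_norm_iff, sub_add_cancel]
    intro h3
    exact h.not_dvd_and_dvd Int.prime_three ⟨by omega, by omega⟩

theorem exists_cubicFactor_eq_cube_of_three_dvd (h : IsCoveringPoint a b c)
    (hc : (3 : ℤ) ∣ c) : ∃ (d : Eisenstein) (r : ℤ),
      cubicFactor a b c = d ^ 3 ∧ 3 * (a + b) - 2 * c = 46 * r ^ 3 ∧ c = r * d.norm := by
  obtain ⟨z, e, rfl, hz, hP, h3⟩ := h.exists_cubicFactor_eq_sqrtNegThree_cube_mul hc
  have hdvd : z ∣ cubicFactor a b (9 * e) := hz ▸ dvd_mul_left _ _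
  have hmul : (z.im - 6 * e) * z.norm = 138 * e ^ 3 := by
    have := h.mul_norm_cubicFactor
    rw [hP, hz, map_mul, map_pow, norm_sqrtNegThree] at this
    linarith
  have him : (3 : ℤ) ∣ z.im := by
    have : (3 : ℤ) ∣ (z.im - 6 * e) * z.norm := hmul ▸ ⟨46 * e ^ 3, by ring⟩
    have := (Int.prime_three.dvd_or_dvd this).resolve_right h3
    omega
  have hre : ¬ (3 : ℤ) ∣ z.re := by
    rwa [three_dvd_norm_iff, dvd_add_left him] at h3
  have hκ : IsCoprime 138 z.norm := (Int.prime_three.coprime_iff_not_dvd.2 h3).mul_left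
    (h.isCoprime_norm_cubicFactor.of_isCoprime_of_dvd_right (map_dvd _ hdvd))
  have hPz : IsCoprime (z.im - 6 * e) z.norm :=
    (h.isCoprime_norm_of_dvd hdvd h3).of_isCoprime_of_dvd_left (hP ▸ dvd_mul_left _ _)
  obtain ⟨d, r, rfl, hr, he⟩ := exists_eq_cube_of_mul_norm_eq (h.isCoprime_re_im_of_dvd hdvd h3)
    hre him (by norm_num) hκ hPz hmul
  refine ⟨sqrtNegThree * d, 3 * r, by rw [hz, mul_pow], ?_, ?_⟩
  · rw [hP, hr]
    ring
  · rw [map_mul, norm_sqrtNegThree, he]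
    ring

theorem exists_cubicFactor_eq_cube (h : IsCoveringPoint a b c) :
    ∃ (d : Eisenstein) (r : ℤ),
      cubicFactor a b c = d ^ 3 ∧ 3 * (a + b) - 2 * c = 46 * r ^ 3 ∧ c = r * d.norm := by
  by_cases hc : (3 : ℤ) ∣ c
  · exact h.exists_cubicFactor_eq_cube_of_three_dvd hc
  · exact h.exists_cubicFactor_eq_cube_of_not_three_dvd hc

theorem norm_cubicFactor_ne_one (h : IsCoveringPoint a b c) : (cubicFactor a b c).norm ≠ 1 := by
  intro hN
  have hsum := four_mul_norm (cubicFactor a b c)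
  rw [hN] at hsum
  obtain rfl : b = a := by
    simp only [cubicFactor] at hsum
    refine sub_eq_zero.1 (Int.abs_lt_one_iff.1 ((sq_lt_one_iff_abs_lt_one _).1 ?_))
    nlinarith [sq_nonneg (2 * (3 * b + 2 * c) - 3 * (b - a))]
  have hb : IsUnit b := isCoprime_self.1 h.isCoprime
  have hb2 : b * b = 1 := Int.isUnit_mul_self hb
  have heven : (2 : ℤ) ∣ b := by
    have : b = c * (c + 1) * (c - 1) := by
      refine mul_left_cancel₀ two_ne_zero ?_
      linear_combination (-2 * b - 2 * c) * hb2 + h.cubic_eq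
    exact this ▸ (Int.even_mul_succ_self c).two_dvd.mul_right _
  exact Int.prime_two.not_isUnit (isUnit_of_dvd_unit heven hb)

theorem two_le_norm_of_cubicFactor_eq_cube (h : IsCoveringPoint a b c) {d : Eisenstein}
    (hd : cubicFactor a b c = d ^ 3) (hd0 : d.norm ≠ 0) : 2 ≤ d.norm := by
  have hd1 : d.norm ≠ 1 := fun hd1 => h.norm_cubicFactor_ne_one <| by
    rw [hd, map_pow, hd1, one_pow]
  have := norm_nonneg d
  omega

theorem exists_curve_point (h : IsCoveringPoint a b c) (hc0 : c ≠ 0) :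
    ∃ v u : ℚ, u ^ 2 = v ^ 3 + v ^ 2 + 2 * v + 1 ∧ v ≠ 0 ∧ |v.num| < 2 * |c| ∧ v.den < c ^ 2 := by
  obtain ⟨d, r, hd, hr, hc⟩ := h.exists_cubicFactor_eq_cube
  obtain ⟨W, hW, hcurve⟩ := exists_curve_coords_of_eq (add_mul_sq_sub_eq hd hr hc)
  obtain ⟨hr0, hd0⟩ : r ≠ 0 ∧ d.norm ≠ 0 := mul_ne_zero_iff.1 (hc ▸ hc0)
  have hd2 := h.two_le_norm_of_cubicFactor_eq_cube hd hd0
  have hX0 : 2 * r ≠ 0 := mul_ne_zero two_ne_zero hr0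
  have hW0 : W ≠ 0 := by
    rintro rfl
    exact pow_ne_zero 3 hX0 (by linarith)
  have hXQ : ((2 * r : ℤ) : ℚ) ≠ 0 := Int.cast_ne_zero.2 hX0
  have hWQ : (W : ℚ) ≠ 0 := Int.cast_ne_zero.2 hW0
  refine ⟨(2 * r : ℤ) / W, (d.re - d.im : ℤ) / W, ?_, div_ne_zero hXQ hWQ, ?_, ?_⟩
  · field_simp
    exact_mod_cast hcurve.trans (by ring)
  · rw [← Rat.divInt_eq_div]
    refine (Int.le_abs_of_dvd hX0 ((abs_dvd _ _).2 (Rat.num_dvd _ hW0))).trans_lt ?_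
    rw [hc, abs_mul, abs_mul, abs_two, abs_of_nonneg (norm_nonneg d)]
    have := abs_pos.2 hr0
    nlinarith
  · rw [← Rat.divInt_eq_div, hc]
    have hs : (d.re + d.im) ^ 2 ≤ 4 * d.norm := by
      rw [norm_eq]
      nlinarith [sq_nonneg (d.re - d.im)]
    exact (Int.le_abs_of_dvd hW0 (Rat.den_dvd _ _)).trans_lt
      (abs_lt_sq_mul_of_sq_le hs hd2 hr0 hW)

end IsCoveringPoint

theorem exists_isCoveringPoint_of_odd {p B C : ℤ} (hp : Odd p) (hpB : IsCoprime p B)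
    (h : C ^ 2 = p ^ 3 + (B * (p + B ^ 2)) ^ 2) : ∃ a b, IsCoveringPoint a b B := by
  have hprod : (C - B * (p + B ^ 2)) * (C + B * (p + B ^ 2)) = p ^ 3 := by
    linear_combination h
  have hcop : IsCoprime p (C + B * (p + B ^ 2) - 1 * (C - B * (p + B ^ 2))) := by
    rw [show C + B * (p + B ^ 2) - 1 * (C - B * (p + B ^ 2)) = 2 * (B * (B ^ 2 + p)) by ring]
    refine (Int.isCoprime_two_right.2 hp).mul_right (hpB.mul_right ?_)
    simpa using (hpB.pow_right (n := 2)).add_mul_left_right 1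
  obtain ⟨α, β, hα, hβ, hαβ, hcop⟩ :=
    exists_eq_pow_of_mul_eq_pow_of_isCoprime_sub (by decide) hprod hcop
  refine ⟨-α, β, hcop.neg_left, ?_⟩
  rw [hαβ] at hα hβ
  linear_combination hα - hβ

theorem exists_isCoveringPoint_of_mul_eq_cube {f g p B : ℤ} (hpB : IsCoprime (2 * p) B)
    (hmul : g * f = p ^ 3) (hsub : f - 2 * g = B * (2 * p + B ^ 2)) :
    ∃ a b c, IsCoveringPoint a b c ∧ c ∣ p := by
  have hpB' : IsCoprime p B := hpB.of_mul_left_right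
  have hcop : IsCoprime p (f - 2 * g) := by
    rw [hsub, add_comm]
    refine hpB'.mul_right ?_
    simpa only [mul_comm p 2] using (hpB'.pow_right (n := 2)).add_mul_left_right 2
  obtain ⟨β, α, rfl, rfl, rfl, -⟩ :=
    exists_eq_pow_of_mul_eq_pow_of_isCoprime_sub (by decide) hmul hcop
  exact ⟨α, -B, β, ⟨hpB'.of_mul_left_right.neg_right, by linear_combination hsub⟩,
    dvd_mul_right _ _⟩

theorem exists_isCoveringPoint_dvd {p B C : ℤ} (hpB : IsCoprime (2 * p) B)
    (h : C ^ 2 = (2 * p) ^ 3 + (B * (2 * p + B ^ 2)) ^ 2) :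
    ∃ a b c, IsCoveringPoint a b c ∧ c ∣ p := by
  have hB : Odd B := Int.isCoprime_two_left.1 hpB.of_mul_left_left
  have hs : Odd (B * (2 * p + B ^ 2)) := hB.mul ((even_two_mul _).add_odd hB.pow)
  have hC : Odd C := by
    have : Odd (C ^ 2) := h ▸ ((Int.even_pow' three_ne_zero).2 (even_two_mul p)).add_odd hs.pow
    exact (Int.odd_pow' two_ne_zero).1 this
  obtain ⟨f₁, hf₁⟩ := (hC.sub_odd hs).two_dvd
  obtain ⟨f₂, hf₂⟩ := (hC.add_odd hs).two_dvd
  have hmul : f₁ * f₂ = 2 * p ^ 3 := by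
    have : (C - B * (2 * p + B ^ 2)) * (C + B * (2 * p + B ^ 2)) = 8 * p ^ 3 := by
      linear_combination h
    rw [hf₁, hf₂] at this
    linarith
  rcases Int.prime_two.dvd_or_dvd (Dvd.intro _ hmul.symm) with ⟨g, rfl⟩ | ⟨g, rfl⟩
  · exact exists_isCoveringPoint_of_mul_eq_cube (f := f₂) (g := g) hpB (by linarith) (by linarith)
  · exact exists_isCoveringPoint_of_mul_eq_cube (f := f₁) (g := g) hpB.neg_right (by linarith)
      (by linarith)

theorem exists_den_eq_sq_and_den_eq_cube_of_sq_eq {v u : ℚ} {p q r : ℤ}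
    (h : u ^ 2 = v ^ 3 + p * v ^ 2 + q * v + r) : ∃ B : ℕ, v.den = B ^ 2 ∧ u.den = B ^ 3 := by
  have hd : (v.den : ℚ) ≠ 0 := Nat.cast_ne_zero.2 v.den_ne_zero
  have hcop : IsCoprime (v.num ^ 3 + v.den * (p * v.num ^ 2 + q * v.num * v.den + r * v.den ^ 2))
      ((v.den : ℤ) ^ 3) :=
    ((Rat.isCoprime_num_den v).pow_left.add_mul_left_left _).pow_right
  have hu : u ^ 2 =
      (v.num ^ 3 + v.den * (p * v.num ^ 2 + q * v.num * v.den + r * v.den ^ 2) : ℤ) /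
        ((v.den : ℤ) ^ 3 : ℤ) := by
    rw [h, eq_div_iff (by exact_mod_cast pow_ne_zero 3 hd)]
    push_cast
    rw [← Rat.mul_den_eq_num v]
    ring
  have hden : v.den ^ 3 = u.den ^ 2 := by
    have := Rat.den_div_eq_of_coprime (by positivity) (Int.isCoprime_iff_nat_coprime.1 hcop)
    rw [← hu, Rat.den_pow] at this
    exact_mod_cast this.symm
  obtain ⟨B, hv, hu⟩ := Nat.exists_eq_pow_of_exponent_coprime_of_pow_eq_pow (by norm_num) hden
  exact ⟨B, hv, hu⟩

theorem exists_isCoveringPoint_of_sq_eq {v u : ℚ} (hv : v ≠ 0)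
    (h : u ^ 2 = v ^ 3 + v ^ 2 + 2 * v + 1) : ∃ a b c : ℤ, IsCoveringPoint a b c ∧ c ≠ 0 ∧
      (c ^ 2 = v.den ∨ 2 * c ∣ v.num) := by
  obtain ⟨B, hvB, huB⟩ := exists_den_eq_sq_and_den_eq_cube_of_sq_eq
    (v := v) (u := u) (p := 1) (q := 2) (r := 1) (by simpa using h)
  have hB : (B : ℤ) ≠ 0 := by
    intro hB
    rw [Nat.cast_eq_zero.1 hB] at hvB
    exact v.den_ne_zero hvB
  have hcop : IsCoprime v.num (B : ℤ) := by
    refine (IsCoprime.pow_right_iff two_pos).1 ?_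
    exact_mod_cast hvB ▸ Rat.isCoprime_num_den v
  have hsq : u.num ^ 2 = v.num ^ 3 + (B * (v.num + B ^ 2)) ^ 2 := by
    have hvq := Rat.mul_den_eq_num v
    have huq := Rat.mul_den_eq_num u
    rw [hvB] at hvq
    rw [huB] at huq
    qify
    rw [← hvq, ← huq]
    push_cast
    linear_combination (B : ℚ) ^ 6 * h
  rcases Int.even_or_odd' v.num with ⟨p, hp | hp⟩
  · rw [hp] at hcop hsq
    obtain ⟨a, b, c, habc, hc⟩ := exists_isCoveringPoint_dvd hcop hsq
    have hp0 : p ≠ 0 := by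
      rintro rfl
      exact Rat.num_ne_zero.2 hv hp
    exact ⟨a, b, c, habc, ne_zero_of_dvd_ne_zero hp0 hc, .inr (hp ▸ mul_dvd_mul_left 2 hc)⟩
  · obtain ⟨a, b, hab⟩ := exists_isCoveringPoint_of_odd ⟨p, hp⟩ hcop hsq
    exact ⟨a, b, B, hab, hB, .inl (by rw [hvB, Nat.cast_pow])⟩

theorem IsCoveringPoint.eq_zero {a b c : ℤ} (h : IsCoveringPoint a b c) : c = 0 := by
  induction hn : c.natAbs using Nat.strong_induction_on generalizing a b c with
  | _ n ih =>
    by_contra hc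
    obtain ⟨v, u, huv, hv, hnum, hden⟩ := h.exists_curve_point hc
    obtain ⟨a', b', c', h', hc', hsmall⟩ := exists_isCoveringPoint_of_sq_eq hv huv
    refine hc' (ih c'.natAbs ?_ h' rfl)
    rw [← hn, Int.natAbs_lt_iff_sq_lt]
    rcases hsmall with hsq | hdvd
    · rwa [hsq]
    · have := (Int.le_abs_of_dvd (Rat.num_ne_zero.2 hv) ((abs_dvd _ _).2 hdvd)).trans_lt hnum
      rw [abs_mul, abs_two] at this
      rw [sq_lt_sq]
      linarith

theorem eq_zero_of_sq_eq {v u : ℚ} (h : u ^ 2 = v ^ 3 + v ^ 2 + 2 * v + 1) : v = 0 := by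
  by_contra hv
  obtain ⟨a, b, c, habc, hc, -⟩ := exists_isCoveringPoint_of_sq_eq hv h
  exact hc habc.eq_zero

theorem eq_zero_of_sq_eq_quartic {x y : ℚ} (h : y ^ 2 = x ^ 4 - 2 * x ^ 3 + x ^ 2 - x) :
    x = 0 := by
  by_contra hx
  have h' : (y / x ^ 2) ^ 2 = (-x⁻¹) ^ 3 + (-x⁻¹) ^ 2 + 2 * (-x⁻¹) + 1 := by
    field_simp
    linear_combination h
  exact hx (by simpa using eq_zero_of_sq_eq h')

theorem stmt_19 :
    (∀ v u : ℚ, u ^ 2 = v ^ 3 + v ^ 2 + 2 * v + 1 → (v = 0 ∧ u = 1) ∨ (v = 0 ∧ u = -1)) ∧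
    (∀ x y : ℚ, y ^ 2 = x ^ 4 - 2 * x ^ 3 + x ^ 2 - x → x = 0 ∧ y = 0) ∧
    ¬ ∃ m : ℚ,
      Irreducible ((X ^ 2 + C m).comp (X ^ 2 + C m)) ∧
      ¬ Irreducible (((X ^ 2 + C m).comp (X ^ 2 + C m)).comp (X ^ 2 + C m)) := by
  refine ⟨fun v u h => ?_, fun x y h => ?_, ?_⟩
  · obtain rfl := eq_zero_of_sq_eq h
    have hu : u ^ 2 = 1 := by linarith
    exact (sq_eq_one_iff.1 hu).imp (⟨rfl, ·⟩) (⟨rfl, ·⟩)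
  · obtain rfl := eq_zero_of_sq_eq_quartic h
    exact ⟨rfl, by simpa using h⟩
  · rintro ⟨m, hirr, hred⟩
    obtain ⟨y, hy⟩ := exists_sq_eq_of_newly_reducible hirr hred
    have hm : -m = 0 := eq_zero_of_sq_eq_quartic (y := y) (by linear_combination hy)
    obtain rfl : m = 0 := neg_eq_zero.1 hm
    rw [C_0, add_zero, pow_comp, X_comp, ← pow_mul] at hirr
    exact not_irreducible_pow (by norm_num) hirr
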